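/- arXiv:1109.3528 — 2 statements merged into one kernel-verified Lean document; each statement's English description precedes it below -/
import Mathlib

section
/- For all integers k, k₀, l with k > k₀ ≥ 0, k₀ ≤ l ≤ k−1, and (k₀, l) ≠ (0,0), there exists a constant C > 0 such that for every 2π-periodic C^k function φ : ℝ² → ℂ, ‖∇^lφ‖_{L⁴(T²)} ≤ C ‖∇^{k₀}φ‖_{L²(T²)}^{(k−l−1/2)/(k−k₀)} ‖∇^kφ‖_{L²(T²)}^{(l−k₀+1/2)/(k−k₀)}. -/
open MeasureTheory Real Set

noncomputable section

abbrev R2 := EuclideanSpace ℝ (Fin 2)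

def Q2 : Set R2 := {x | ∀ i, x i ∈ Icc (-π) π}

def Periodic2 {E : Type*} (f : R2 → E) : Prop :=
  ∀ (x : R2) (k : Fin 2 → ℤ),
    f (x + (EuclideanSpace.equiv (Fin 2) ℝ).symm (fun i => 2 * π * (k i : ℝ))) = f x

/-!
Write `S j = ‖∇ʲφ‖²` in `L²(T²)`. Along a coordinate line, `h u'(t)` differs from
`u (t + h) - u t` by at most `h ∫ |u''|` over `[t, t + h]`. Squaring and integrating over the square
gives `h² S (j + 1) ≤ 16 S j + 4 h⁴ S (j + 2)` for every `h ≥ 0`, and hence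
`S (j + 1)² ≤ 16² S j S (j + 2)`. For `h = 2π` the difference vanishes by periodicity, and the same
estimate becomes the Poincaré inequality `S (j + 1) ≤ (4π)² S (j + 2)`.

Ladyzhenskaya's inequality, which bounds `|f|²` by integrals of `|f|² + 4π |f| |∇f|` along both
coordinate lines, combines with Poincaré's into `‖∇ˡφ‖⁴ ≤ 16 S l S (l + 1)` in `L⁴(T²)` for `l ≥ 1`.
Since `S` is log-convex up to a constant, both factors interpolate between `S k₀` and `S k`, and the
exponents add up to the ones claimed.
-/

section CauchySchwarz

theorem sq_integral_mul_le {α : Type*} [MeasurableSpace α] {μ : Measure α} {f g : α → ℝ}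
    (hf : MemLp f 2 μ) (hg : MemLp g 2 μ) :
    (∫ x, f x * g x ∂μ) ^ 2 ≤ (∫ x, f x ^ 2 ∂μ) * ∫ x, g x ^ 2 ∂μ := by
  have expand (r : ℝ) : ∫ x, (f x - r * g x) ^ 2 ∂μ = (∫ x, g x ^ 2 ∂μ) * (r * r) +
      (-2 * ∫ x, f x * g x ∂μ) * r + ∫ x, f x ^ 2 ∂μ := by
    have hfg : Integrable (fun x ↦ 2 * r * (f x * g x)) μ := (hf.integrable_mul hg).const_mul _
    have hgg := hg.integrable_sq.const_mul (r ^ 2)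
    calc ∫ x, (f x - r * g x) ^ 2 ∂μ
        = ∫ x, (f x ^ 2 - 2 * r * (f x * g x) + r ^ 2 * g x ^ 2) ∂μ := by
          congr! 2 with x; ring
      _ = (∫ x, f x ^ 2 ∂μ) - 2 * r * (∫ x, f x * g x ∂μ) + r ^ 2 * ∫ x, g x ^ 2 ∂μ := by
          rw [integral_add (by exact hf.integrable_sq.sub hfg) hgg,
            integral_sub hf.integrable_sq hfg, integral_const_mul, integral_const_mul]
      _ = _ := by ring
  have := discrim_le_zero fun r ↦ (expand r).symm ▸ integral_nonneg fun x ↦ sq_nonneg _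
  rw [discrim] at this
  linarith

theorem sq_intervalIntegral_le {f : ℝ → ℝ} (hf : Continuous f) {a b : ℝ} (hab : a ≤ b) :
    (∫ t in a..b, f t) ^ 2 ≤ (b - a) * ∫ t in a..b, f t ^ 2 := by
  have hf2 : MemLp f 2 (volume.restrict (Ioc a b)) :=
    (memLp_two_iff_integrable_sq hf.aestronglyMeasurable).2
      ((hf.pow 2).integrableOn_Ioc)
  simpa [intervalIntegral.integral_of_le hab, hab, mul_comm] using
    sq_integral_mul_le hf2 (memLp_const (1 : ℝ))

end CauchySchwarz

section LogConvex

variable {R : Type*} [CommSemiring R] [LinearOrder R] [IsStrictOrderedRing R] {c : ℕ → R} {n : ℕ}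

theorem pow_succ_le_mul_pow_of_sq_le_mul (hc : ∀ i, 0 ≤ c i)
    (h : ∀ i, i + 2 ≤ n → c (i + 1) ^ 2 ≤ c i * c (i + 2)) {j : ℕ} (hj : j + 1 ≤ n) :
    c j ^ (j + 1) ≤ c 0 * c (j + 1) ^ j := by
  induction j with
  | zero => simp
  | succ j ih =>
    rcases (hc (j + 1)).eq_or_lt with hz | hpos
    · rw [← hz, zero_pow (by omega)]
      exact mul_nonneg (hc _) (pow_nonneg (hc _) _)
    · have := hc (j + 2)
      refine le_of_mul_le_mul_left ?_ (pow_pos hpos j)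
      calc c (j + 1) ^ j * c (j + 1) ^ (j + 1 + 1) = (c (j + 1) ^ 2) ^ (j + 1) := by ring
        _ ≤ (c j * c (j + 2)) ^ (j + 1) := by gcongr; exact h j hj
        _ = c j ^ (j + 1) * c (j + 2) ^ (j + 1) := by ring
        _ ≤ (c 0 * c (j + 1) ^ j) * c (j + 2) ^ (j + 1) := by gcongr; exact ih (by omega)
        _ = _ := by ring

theorem pow_add_le_pow_mul_pow_of_sq_le_mul (hc : ∀ i, 0 ≤ c i)
    (h : ∀ i, i + 2 ≤ n → c (i + 1) ^ 2 ≤ c i * c (i + 2)) {j d : ℕ} (hn : j + d ≤ n) :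
    c j ^ (j + d) ≤ c 0 ^ d * c (j + d) ^ j := by
  induction d with
  | zero => simp
  | succ d ih =>
    rcases (j + d).eq_zero_or_pos with hz | hpos
    · obtain ⟨rfl, rfl⟩ : j = 0 ∧ d = 0 := by omega
      simp
    · have := hc 0
      have := hc (j + d)
      have := hc (j + (d + 1))
      refine (pow_le_pow_iff_left₀ (pow_nonneg (hc j) _) (by positivity) hpos.ne').1 ?_
      calc (c j ^ (j + (d + 1))) ^ (j + d) = (c j ^ (j + d)) ^ (j + d + 1) := by ring
        _ ≤ (c 0 ^ d * c (j + d) ^ j) ^ (j + d + 1) := by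
            gcongr; exacts [pow_nonneg (hc j) _, ih (by omega)]
        _ = c 0 ^ (d * (j + d + 1)) * (c (j + d) ^ (j + d + 1)) ^ j := by ring
        _ ≤ c 0 ^ (d * (j + d + 1)) * (c 0 * c (j + d + 1) ^ (j + d)) ^ j := by
            gcongr; exact pow_succ_le_mul_pow_of_sq_le_mul hc h (by omega)
        _ = _ := by rw [← add_assoc]; ring

theorem le_rpow_mul_rpow_of_pow_add_le {x a b : ℝ} (ha : 0 ≤ a) (hb : 0 ≤ b)
    {p q : ℕ} (hpq : 0 < p + q) (h : x ^ (p + q) ≤ a ^ p * b ^ q) :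
    x ≤ a ^ (p / (p + q : ℝ)) * b ^ (q / (p + q : ℝ)) := by
  refine le_of_pow_le_pow_left₀ hpq.ne' (by positivity) (h.trans_eq ?_)
  have hpq' : (p + q : ℝ) ≠ 0 := by exact_mod_cast hpq.ne'
  rw [mul_pow, ← rpow_mul_natCast ha, ← rpow_mul_natCast hb]
  push_cast
  rw [div_mul_cancel₀ _ hpq', div_mul_cancel₀ _ hpq', rpow_natCast, rpow_natCast]

theorem le_pow_mul_rpow_mul_rpow_of_sq_le_mul {c : ℕ → ℝ} (hc : ∀ i, 0 ≤ c i) {D : ℝ} (hD : 0 < D)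
    (h : ∀ i, i + 2 ≤ n → c (i + 1) ^ 2 ≤ D ^ 2 * (c i * c (i + 2))) {j d : ℕ}
    (hjd : 0 < j + d) (hn : j + d ≤ n) :
    c j ≤ D ^ (j * d) * (c 0 ^ (d / (j + d : ℝ)) * c (j + d) ^ (j / (j + d : ℝ))) := by
  -- The factor `D ^ (i ^ 2)` absorbs the constant because `i ^ 2` has second difference `2`.
  have rescaled : D ^ (j ^ 2) * c j ≤
      c 0 ^ (d / (j + d : ℝ)) * (D ^ ((j + d) ^ 2) * c (j + d)) ^ (j / (j + d : ℝ)) := by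
    have := hc (j + d)
    rw [add_comm (j : ℝ)]
    refine le_rpow_mul_rpow_of_pow_add_le (hc 0) (by positivity) (by omega) ?_
    have := pow_add_le_pow_mul_pow_of_sq_le_mul (c := fun i ↦ D ^ (i ^ 2) * c i)
      (fun i ↦ mul_nonneg (by positivity) (hc i)) (fun i hi ↦ ?_) hn
    · simpa [add_comm d j] using this
    · calc (D ^ ((i + 1) ^ 2) * c (i + 1)) ^ 2 = D ^ (2 * (i + 1) ^ 2) * c (i + 1) ^ 2 := by ring
        _ ≤ D ^ (2 * (i + 1) ^ 2) * (D ^ 2 * (c i * c (i + 2))) := by gcongr; exact h i hi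
        _ = _ := by ring
  have hDpow : (D ^ ((j + d) ^ 2)) ^ (j / (j + d : ℝ)) = D ^ (j ^ 2) * D ^ (j * d) := by
    have : (j + d : ℝ) ≠ 0 := by exact_mod_cast (by omega : j + d ≠ 0)
    rw [← rpow_natCast, ← rpow_mul hD.le, ← pow_add, ← rpow_natCast]
    congr 1
    push_cast
    field_simp
  rw [mul_rpow (by positivity) (hc _), hDpow] at rescaled
  exact le_of_mul_le_mul_left (rescaled.trans_eq (by ring)) (pow_pos hD (j ^ 2))

end LogConvex

section Interval

variable {E : Type*} [NormedAddCommGroup E] [NormedSpace ℝ E]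

theorem intervalIntegral_swap_of_continuous {f : ℝ → ℝ → E} (hf : Continuous (Function.uncurry f))
    (a b c d : ℝ) : ∫ s in a..b, ∫ t in c..d, f s t = ∫ t in c..d, ∫ s in a..b, f s t :=
  intervalIntegral_intervalIntegral_swap <|
    (hf.continuousOn.integrableOn_compact (isCompact_uIcc.prod isCompact_uIcc)).mono_set
      (prod_mono uIoc_subset_uIcc uIoc_subset_uIcc)

theorem intervalIntegral_window (w : ℝ → E) (t h : ℝ) :
    ∫ s in t..t + h, w s = ∫ s in (0 : ℝ)..h, w (t + s) := by
  simp only [intervalIntegral.integral_comp_add_left, add_zero]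

theorem continuous_intervalIntegral_window {w : ℝ → E} (hw : Continuous w) (h : ℝ) :
    Continuous fun t ↦ ∫ s in t..t + h, w s := by
  simp only [intervalIntegral_window]
  fun_prop

theorem intervalIntegral_intervalIntegral_window [CompleteSpace E] {w : ℝ → E} {T : ℝ}
    (hw : Continuous w) (hT : Function.Periodic w T) (a h : ℝ) :
    ∫ t in a..a + T, ∫ s in t..t + h, w s = h • ∫ s in a..a + T, w s :=
  calc ∫ t in a..a + T, ∫ s in t..t + h, w s
      = ∫ t in a..a + T, ∫ s in (0 : ℝ)..h, w (t + s) := by simp only [intervalIntegral_window]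
    _ = ∫ s in (0 : ℝ)..h, ∫ t in a..a + T, w (t + s) :=
        intervalIntegral_swap_of_continuous (f := fun t s ↦ w (t + s)) (by fun_prop) ..
    _ = ∫ _ in (0 : ℝ)..h, ∫ t in a..a + T, w t := by
        congr! 2 with s
        rw [intervalIntegral.integral_comp_add_right, add_right_comm]
        exact hT.intervalIntegral_add_eq _ _
    _ = _ := by simp

variable {u u' u'' : ℝ → E}

theorem norm_sub_le_integral_norm_deriv (hu : ∀ t, HasDerivAt u (u' t) t) (hu' : Continuous u')
    {a b : ℝ} (hab : a ≤ b) : ‖u b - u a‖ ≤ ∫ t in a..b, ‖u' t‖ :=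
  norm_sub_le_integral_of_norm_deriv_le_of_le hab
    (fun t _ ↦ (hu t).continuousAt.continuousWithinAt)
    (fun t _ ↦ (hu t).differentiableAt.differentiableWithinAt)
    (.of_forall fun t _ ↦ (hu t).deriv ▸ le_rfl) (hu'.norm.intervalIntegrable a b)

theorem norm_sq_le_norm_sq_add_integral (hu : ∀ t, HasDerivAt u (u' t) t) (hu' : Continuous u')
    {a b s t : ℝ} (hs : s ∈ Icc a b) (ht : t ∈ Icc a b) :
    ‖u t‖ ^ 2 ≤ ‖u s‖ ^ 2 + 2 * ∫ r in a..b, ‖u r‖ * ‖u' r‖ := by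
  have hc : Continuous u := continuous_iff_continuousAt.2 fun t ↦ (hu t).continuousAt
  -- A norming functional at `u t` stands in for the norm, which need not be differentiable.
  obtain ⟨f, hf, hft⟩ := exists_dual_vector'' ℝ (u t)
  have f_le (x : E) : |f x| ≤ ‖x‖ := f.le_of_opNorm_le hf x |>.trans_eq (one_mul _)
  have hderiv (r : ℝ) : HasDerivAt (fun r ↦ f (u r) ^ 2) (2 * f (u r) * f (u' r)) r := by
    simpa using (f.hasFDerivAt.comp_hasDerivAt r (hu r)).fun_pow 2
  have increment {p q : ℝ} (hpq : p ≤ q) (hp : a ≤ p) (hq : q ≤ b) :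
      |f (u q) ^ 2 - f (u p) ^ 2| ≤ 2 * ∫ r in a..b, ‖u r‖ * ‖u' r‖ :=
    calc |f (u q) ^ 2 - f (u p) ^ 2|
        ≤ ∫ r in p..q, ‖2 * f (u r) * f (u' r)‖ :=
          norm_sub_le_integral_norm_deriv hderiv (by fun_prop) hpq
      _ ≤ ∫ r in a..b, ‖2 * f (u r) * f (u' r)‖ :=
          intervalIntegral.integral_mono_interval hp hpq hq (.of_forall fun _ ↦ norm_nonneg _)
            (Continuous.intervalIntegrable (by fun_prop) _ _)
      _ ≤ ∫ r in a..b, 2 * (‖u r‖ * ‖u' r‖) := by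
          refine intervalIntegral.integral_mono (hp.trans (hpq.trans hq))
            (Continuous.intervalIntegrable (by fun_prop) _ _)
            (Continuous.intervalIntegrable (by fun_prop) _ _) fun r ↦ ?_
          simp only [norm_mul, Real.norm_eq_abs, abs_two, mul_assoc]
          gcongr <;> exact f_le _
      _ = _ := intervalIntegral.integral_const_mul _ _
  have hst : |f (u t) ^ 2 - f (u s) ^ 2| ≤ 2 * ∫ r in a..b, ‖u r‖ * ‖u' r‖ := by
    rcases le_total s t with h | h
    · exact increment h hs.1 ht.2
    · exact abs_sub_comm _ _ |>.trans_le (increment h ht.1 hs.2)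
  calc ‖u t‖ ^ 2 = f (u t) ^ 2 := by simp [hft]
    _ ≤ f (u s) ^ 2 + 2 * ∫ r in a..b, ‖u r‖ * ‖u' r‖ := by linarith [le_of_abs_le hst]
    _ ≤ _ := by gcongr ?_ + _; exact sq_le_sq.2 ((f_le _).trans_eq (abs_norm _).symm)

theorem norm_sq_le_integral_norm_sq_add (hu : ∀ t, HasDerivAt u (u' t) t) (hu' : Continuous u')
    {a b t : ℝ} (ht : t ∈ Icc a b) :
    (b - a) * ‖u t‖ ^ 2 ≤ ∫ s in a..b, (‖u s‖ ^ 2 + 2 * (b - a) * (‖u s‖ * ‖u' s‖)) := by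
  have hc : Continuous u := continuous_iff_continuousAt.2 fun t ↦ (hu t).continuousAt
  have hab : a ≤ b := ht.1.trans ht.2
  calc (b - a) * ‖u t‖ ^ 2 = ∫ _ in a..b, ‖u t‖ ^ 2 := by simp
    _ ≤ ∫ s in a..b, (‖u s‖ ^ 2 + 2 * ∫ r in a..b, ‖u r‖ * ‖u' r‖) :=
        intervalIntegral.integral_mono_on hab (Continuous.intervalIntegrable (by fun_prop) _ _)
          (Continuous.intervalIntegrable (by fun_prop) _ _)
          fun s hs ↦ norm_sq_le_norm_sq_add_integral hu hu' hs ht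
    _ = _ := by
        rw [intervalIntegral.integral_add, intervalIntegral.integral_add,
          intervalIntegral.integral_const_mul (2 * (b - a)), intervalIntegral.integral_const,
          smul_eq_mul]
        · ring
        all_goals exact Continuous.intervalIntegrable (by fun_prop) _ _

theorem mul_norm_deriv_le (hu : ∀ t, HasDerivAt u (u' t) t) (hu' : ∀ t, HasDerivAt u' (u'' t) t)
    (hu'' : Continuous u'') (t : ℝ) {h : ℝ} (hh : 0 ≤ h) :
    h * ‖u' t‖ ≤ ‖u (t + h) - u t‖ + h * ∫ s in t..t + h, ‖u'' s‖ := by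
  have oscillation (s : ℝ) (hs : s ∈ Icc t (t + h)) :
      ‖u' s - u' t‖ ≤ ∫ s in t..t + h, ‖u'' s‖ :=
    (norm_sub_le_integral_norm_deriv hu' hu'' hs.1).trans <|
      intervalIntegral.integral_mono_interval le_rfl hs.1 hs.2 (.of_forall fun _ ↦ norm_nonneg _)
        (hu''.norm.intervalIntegrable _ _)
  have hderiv (s : ℝ) : HasDerivAt (fun s ↦ u s - s • u' t) (u' s - u' t) s := by
    simpa using (hu s).fun_sub ((hasDerivAt_id s).smul_const (u' t))
  have remainder := (convex_Icc t (t + h)).norm_image_sub_le_of_norm_hasDerivWithin_le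
    (fun s _ ↦ (hderiv s).hasDerivWithinAt) oscillation
    (left_mem_Icc.2 (by linarith)) (right_mem_Icc.2 (by linarith))
  calc h * ‖u' t‖ = ‖(u (t + h) - u t) - ((u (t + h) - (t + h) • u' t) - (u t - t • u' t))‖ := by
        rw [← abs_of_nonneg hh, ← Real.norm_eq_abs, ← norm_smul, Real.norm_of_nonneg hh]
        congr 1; module
    _ ≤ _ := (norm_sub_le _ _).trans (by gcongr; simpa [abs_of_nonneg hh, mul_comm] using remainder)

theorem sq_mul_norm_deriv_sq_le (hu : ∀ t, HasDerivAt u (u' t) t)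
    (hu' : ∀ t, HasDerivAt u' (u'' t) t) (hu'' : Continuous u'') (t : ℝ) {h : ℝ} (hh : 0 ≤ h) :
    h ^ 2 * ‖u' t‖ ^ 2 ≤
      2 * ‖u (t + h) - u t‖ ^ 2 + 2 * h ^ 3 * ∫ s in t..t + h, ‖u'' s‖ ^ 2 :=
  calc h ^ 2 * ‖u' t‖ ^ 2 = (h * ‖u' t‖) ^ 2 := by ring
    _ ≤ (‖u (t + h) - u t‖ + h * ∫ s in t..t + h, ‖u'' s‖) ^ 2 := by
        gcongr; exact mul_norm_deriv_le hu hu' hu'' t hh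
    _ ≤ 2 * (‖u (t + h) - u t‖ ^ 2 + (h * ∫ s in t..t + h, ‖u'' s‖) ^ 2) := add_sq_le
    _ = 2 * ‖u (t + h) - u t‖ ^ 2 + 2 * h ^ 2 * (∫ s in t..t + h, ‖u'' s‖) ^ 2 := by ring
    _ ≤ 2 * ‖u (t + h) - u t‖ ^ 2 +
          2 * h ^ 2 * ((t + h - t) * ∫ s in t..t + h, ‖u'' s‖ ^ 2) := by
        gcongr; exact sq_intervalIntegral_le hu''.norm (by linarith)
    _ = _ := by ring

theorem sq_mul_integral_norm_deriv_sq_le (hu : ∀ t, HasDerivAt u (u' t) t)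
    (hu' : ∀ t, HasDerivAt u' (u'' t) t) (hu'' : Continuous u'') {T : ℝ} (hT : 0 ≤ T)
    (hper : Function.Periodic u'' T) (a : ℝ) {h : ℝ} (hh : 0 ≤ h) :
    h ^ 2 * ∫ t in a..a + T, ‖u' t‖ ^ 2 ≤
      ∫ t in a..a + T, (2 * ‖u (t + h) - u t‖ ^ 2 + 2 * h ^ 4 * ‖u'' t‖ ^ 2) := by
  have hc : Continuous u := continuous_iff_continuousAt.2 fun t ↦ (hu t).continuousAt
  have hc' : Continuous u' := continuous_iff_continuousAt.2 fun t ↦ (hu' t).continuousAt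
  have hw : Continuous fun t ↦ ‖u'' t‖ ^ 2 := by fun_prop
  have hwindow := continuous_intervalIntegral_window hw h
  have hwT : Function.Periodic (fun t ↦ ‖u'' t‖ ^ 2) T := hper.comp fun x ↦ ‖x‖ ^ 2
  calc h ^ 2 * ∫ t in a..a + T, ‖u' t‖ ^ 2 = ∫ t in a..a + T, h ^ 2 * ‖u' t‖ ^ 2 := by simp
    _ ≤ ∫ t in a..a + T,
          (2 * ‖u (t + h) - u t‖ ^ 2 + 2 * h ^ 3 * ∫ s in t..t + h, ‖u'' s‖ ^ 2) :=
        intervalIntegral.integral_mono (by linarith)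
          (Continuous.intervalIntegrable (by fun_prop) _ _)
          (Continuous.intervalIntegrable (by fun_prop) _ _)
          fun t ↦ sq_mul_norm_deriv_sq_le hu hu' hu'' t hh
    _ = _ := by
        rw [intervalIntegral.integral_add, intervalIntegral.integral_add,
          intervalIntegral.integral_const_mul (2 * h ^ 3),
          intervalIntegral_intervalIntegral_window hw hwT, smul_eq_mul,
          intervalIntegral.integral_const_mul (2 * h ^ 4)]
        · ring
        all_goals exact Continuous.intervalIntegrable (by fun_prop) _ _

end Interval

section Derivatives

variable {E F : Type*} [NormedAddCommGroup E] [NormedSpace ℝ E] [NormedAddCommGroup F]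
  [NormedSpace ℝ F]

theorem hasDerivAt_comp_line {f : E → F} (hf : Differentiable ℝ f) (x v : E) (t : ℝ) :
    HasDerivAt (fun t : ℝ ↦ f (x + t • v)) (fderiv ℝ f (x + t • v) v) t :=
  (hf _).hasFDerivAt.comp_hasDerivAt t <| by
    simpa using ((hasDerivAt_id t).smul_const v).const_add x

-- The default depth does not find the norm on iterated spaces of continuous linear maps.
set_option maxSynthPendingDepth 3 in
theorem norm_fderiv_fderiv_iteratedFDeriv (φ : E → F) (j : ℕ) (x : E) :
    ‖fderiv ℝ (fderiv ℝ (iteratedFDeriv ℝ j φ)) x‖ = ‖iteratedFDeriv ℝ (j + 2) φ x‖ := by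
  rw [fderiv_iteratedFDeriv, LinearIsometryEquiv.comp_fderiv, ← norm_fderiv_iteratedFDeriv]
  exact LinearIsometry.norm_toContinuousLinearMap_comp
    (continuousMultilinearCurryLeftEquiv ℝ (fun _ : Fin (j + 1) ↦ E) F).toLinearIsometry

variable {ι : Type*} [Fintype ι] [DecidableEq ι]

theorem norm_apply_single_le (A : EuclideanSpace ℝ ι →L[ℝ] F) (i : ι) :
    ‖A (EuclideanSpace.single i 1)‖ ≤ ‖A‖ := by
  simpa using A.le_opNorm (EuclideanSpace.single i 1)

theorem opNorm_sq_le_sum (A : EuclideanSpace ℝ ι →L[ℝ] F) :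
    ‖A‖ ^ 2 ≤ ∑ i, ‖A (EuclideanSpace.single i 1)‖ ^ 2 := by
  refine (Real.le_sqrt (norm_nonneg _) (by positivity)).1 ?_
  refine A.opNorm_le_bound (sqrt_nonneg _) fun x ↦ ?_
  calc ‖A x‖ = ‖∑ i, x i • A (EuclideanSpace.single i 1)‖ := by
        conv_lhs => rw [← (EuclideanSpace.basisFun ι ℝ).sum_repr x]
        simp
    _ ≤ ∑ i, ‖A (EuclideanSpace.single i 1)‖ * ‖x i‖ :=
        norm_sum_le_of_le _ fun i _ ↦ by rw [norm_smul, mul_comm]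
    _ ≤ √(∑ i, ‖A (EuclideanSpace.single i 1)‖ ^ 2) * ‖x‖ := by
        rw [EuclideanSpace.norm_eq]
        exact Real.sum_mul_le_sqrt_mul_sqrt _ _ _

end Derivatives

local notation "𝐞[" i "]" => (EuclideanSpace.single i (1 : ℝ) : R2)

section Square

theorem isCompact_Q2 : IsCompact Q2 := by
  have : Q2 = (EuclideanSpace.equiv (Fin 2) ℝ).symm '' univ.pi fun _ ↦ Icc (-π) π := by
    ext x
    exact ⟨fun h ↦ ⟨x, fun i _ ↦ h i, rfl⟩, by rintro ⟨y, h, rfl⟩; exact fun i ↦ h i trivial⟩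
  rw [this]
  exact (isCompact_univ_pi fun _ ↦ isCompact_Icc).image
    (EuclideanSpace.equiv (Fin 2) ℝ).symm.continuous

theorem integrableOn_Q2 {E : Type*} [NormedAddCommGroup E] {f : R2 → E}
    (hf : Continuous f) : IntegrableOn f Q2 :=
  hf.continuousOn.integrableOn_compact isCompact_Q2

theorem setIntegral_Q2_mono {f g : R2 → ℝ} (hf : Continuous f) (hg : Continuous g)
    (h : ∀ x, f x ≤ g x) : ∫ x in Q2, f x ≤ ∫ x in Q2, g x :=
  setIntegral_mono (integrableOn_Q2 hf) (integrableOn_Q2 hg) h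

theorem sq_setIntegral_Q2_mul_le {f g : R2 → ℝ} (hf : Continuous f) (hg : Continuous g) :
    (∫ x in Q2, f x * g x) ^ 2 ≤ (∫ x in Q2, f x ^ 2) * ∫ x in Q2, g x ^ 2 :=
  sq_integral_mul_le
    ((memLp_two_iff_integrable_sq hf.aestronglyMeasurable).2 (integrableOn_Q2 (hf.pow 2)))
    ((memLp_two_iff_integrable_sq hg.aestronglyMeasurable).2 (integrableOn_Q2 (hg.pow 2)))

theorem setIntegral_Q2_eq_intervalIntegral {E : Type*} [NormedAddCommGroup E] [NormedSpace ℝ E]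
    {f : R2 → E} (hf : Continuous f) (i : Fin 2) :
    ∫ x in Q2, f x = ∫ c in -π..π, ∫ t in -π..π, f (c • 𝐞[i.rev] + t • 𝐞[i]) := by
  have hπ : -π ≤ π := by linarith [pi_pos]
  let Φ : ℝ × ℝ ≃ᵐ R2 :=
    (MeasurableEquiv.finTwoArrow (α := ℝ)).symm.trans (MeasurableEquiv.toLp 2 (Fin 2 → ℝ))
  have hΦ : MeasurePreserving Φ :=
    ((volume_preserving_finTwoArrow ℝ).symm _).trans (PiLp.volume_preserving_toLp (Fin 2))
  have hΦ_apply (p : ℝ × ℝ) : Φ p = p.1 • 𝐞[0] + p.2 • 𝐞[1] := by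
    ext j; fin_cases j <;> simp [Φ, MeasurableEquiv.finTwoArrow]
  have hpre : Φ ⁻¹' Q2 = Icc (-π) π ×ˢ Icc (-π) π := by
    ext p; simp [Q2, hΦ_apply, Fin.forall_fin_two, -Icc_prod_Icc]
  have fubini : ∫ x in Q2, f x = ∫ a in -π..π, ∫ b in -π..π, f (a • 𝐞[0] + b • 𝐞[1]) := by
    rw [← hΦ.setIntegral_preimage_emb Φ.measurableEmbedding, hpre, Measure.volume_eq_prod]
    simp only [hΦ_apply]
    rw [setIntegral_prod]
    · simp only [integral_Icc_eq_integral_Ioc, ← intervalIntegral.integral_of_le hπ]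
    · exact ContinuousOn.integrableOn_compact (isCompact_Icc.prod isCompact_Icc)
        (by fun_prop)
  match i with
  | 0 =>
    rw [fubini, intervalIntegral_swap_of_continuous (by unfold Function.uncurry; fun_prop)]
    simp only [add_comm, Fin.rev_zero, Fin.last, Fin.isValue]
    rfl
  | 1 => exact fubini

theorem setIntegral_Q2_mono_of_slices {f g : R2 → ℝ} (hf : Continuous f) (hg : Continuous g)
    (i : Fin 2)
    (h : ∀ x, ∫ t in -π..π, f (x + t • 𝐞[i]) ≤ ∫ t in -π..π, g (x + t • 𝐞[i])) :
    ∫ x in Q2, f x ≤ ∫ x in Q2, g x := by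
  rw [setIntegral_Q2_eq_intervalIntegral hf i, setIntegral_Q2_eq_intervalIntegral hg i]
  exact intervalIntegral.integral_mono (by linarith [pi_pos])
    (Continuous.intervalIntegrable (by fun_prop) _ _)
    (Continuous.intervalIntegrable (by fun_prop) _ _) fun c ↦ h _

theorem sq_setIntegral_Q2_le_of_slices {g w : R2 → ℝ} (hg : Continuous g) (hw : Continuous w)
    (hg₀ : ∀ x, 0 ≤ g x)
    (h : ∀ (i : Fin 2) (c : ℝ), ∀ t ∈ Icc (-π) π,
      g (c • 𝐞[i.rev] + t • 𝐞[i]) ≤ ∫ s in -π..π, w (c • 𝐞[i.rev] + s • 𝐞[i])) :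
    ∫ x in Q2, g x ^ 2 ≤ (∫ x in Q2, w x) ^ 2 := by
  have hπ : -π ≤ π := by linarith [pi_pos]
  let W (i : Fin 2) (c : ℝ) : ℝ := ∫ s in -π..π, w (c • 𝐞[i.rev] + s • 𝐞[i])
  have hW (i : Fin 2) : Continuous (W i) := by fun_prop
  have integral_W (i : Fin 2) : ∫ c in -π..π, W i c = ∫ x in Q2, w x :=
    (setIntegral_Q2_eq_intervalIntegral hw i).symm
  calc ∫ x in Q2, g x ^ 2 = ∫ c in -π..π, ∫ t in -π..π, g (c • 𝐞[0] + t • 𝐞[1]) ^ 2 :=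
        setIntegral_Q2_eq_intervalIntegral (by fun_prop) 1
    _ ≤ ∫ c in -π..π, ∫ t in -π..π, W 1 c * W 0 t := by
        refine intervalIntegral.integral_mono_on hπ
          (Continuous.intervalIntegrable (by fun_prop) _ _)
          (Continuous.intervalIntegrable (by fun_prop) _ _) fun c hc ↦ ?_
        refine intervalIntegral.integral_mono_on hπ
          (Continuous.intervalIntegrable (by fun_prop) _ _)
          (Continuous.intervalIntegrable (by fun_prop) _ _) fun t ht ↦ ?_
        have along_one : g (c • 𝐞[0] + t • 𝐞[1]) ≤ W 1 c := h 1 c t ht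
        have along_zero : g (c • 𝐞[0] + t • 𝐞[1]) ≤ W 0 t := add_comm (c • 𝐞[0]) _ ▸ h 0 t c hc
        rw [sq]
        exact mul_le_mul along_one along_zero (hg₀ _) ((hg₀ _).trans along_one)
    _ = (∫ c in -π..π, W 1 c) * ∫ t in -π..π, W 0 t := by
        simp only [intervalIntegral.integral_const_mul, intervalIntegral.integral_mul_const]
    _ = _ := by rw [integral_W, integral_W, sq]

end Square

section Periodic

variable {F : Type*} {f : R2 → F}

theorem Periodic2.periodic_line (hf : Periodic2 f) (x : R2) (i : Fin 2) :
    Function.Periodic (fun t : ℝ ↦ f (x + t • 𝐞[i])) (2 * π) := by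
  intro t
  change f _ = f _
  rw [← hf (x + t • 𝐞[i]) (Pi.single i 1)]
  congr 1
  ext j
  rcases eq_or_ne j i with rfl | hj
  · simp [add_assoc]
  · simp [hj]

theorem Periodic2.comp {F' : Type*} (hf : Periodic2 f) (g : F → F') :
    Periodic2 fun x ↦ g (f x) := fun x k ↦ congrArg g (hf x k)

theorem Periodic2.setIntegral_Q2_add_smul [NormedAddCommGroup F] [NormedSpace ℝ F]
    (hf : Periodic2 f) (hc : Continuous f) (i : Fin 2) (h : ℝ) :
    ∫ x in Q2, f (x + h • 𝐞[i]) = ∫ x in Q2, f x := by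
  rw [setIntegral_Q2_eq_intervalIntegral (by fun_prop) i, setIntegral_Q2_eq_intervalIntegral hc i]
  congr! 2 with c
  simp only [add_assoc, ← add_smul]
  have := (hf.periodic_line (c • 𝐞[i.rev]) i).intervalIntegral_add_eq (-π + h) (-π)
  rw [intervalIntegral.integral_comp_add_right (fun t ↦ f (c • 𝐞[i.rev] + t • 𝐞[i]))]
  convert this using 2 <;> ring

variable [NormedAddCommGroup F]

theorem Periodic2.setIntegral_norm_sub_sq_le (hp : Periodic2 f) (hf : Continuous f)
    (h : ℝ) (i : Fin 2) :
    ∫ x in Q2, ‖f (x + h • 𝐞[i]) - f x‖ ^ 2 ≤ 4 * ∫ x in Q2, ‖f x‖ ^ 2 :=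
  calc ∫ x in Q2, ‖f (x + h • 𝐞[i]) - f x‖ ^ 2
      ≤ ∫ x in Q2, 2 * (‖f (x + h • 𝐞[i])‖ ^ 2 + ‖f x‖ ^ 2) :=
        setIntegral_Q2_mono (by fun_prop) (by fun_prop) fun x ↦
          (pow_le_pow_left₀ (norm_nonneg _) (norm_sub_le _ _) 2).trans add_sq_le
    _ = 2 * ((∫ x in Q2, ‖f (x + h • 𝐞[i])‖ ^ 2) + ∫ x in Q2, ‖f x‖ ^ 2) := by
        rw [integral_const_mul,
          integral_add (integrableOn_Q2 (by fun_prop)) (integrableOn_Q2 (by fun_prop))]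
    _ = _ := by
        rw [(hp.comp fun y ↦ ‖y‖ ^ 2).setIntegral_Q2_add_smul (by fun_prop) i h]; ring

variable [NormedSpace ℝ F]

protected theorem Periodic2.iteratedFDeriv (hf : Periodic2 f) (n : ℕ) :
    Periodic2 (iteratedFDeriv ℝ n f) := by
  intro x k
  rw [← iteratedFDeriv_comp_add_right]
  congr 1
  exact funext fun y ↦ hf y k

protected theorem Periodic2.fderiv (hf : Periodic2 f) : Periodic2 (fderiv ℝ f) := by
  intro x k
  rw [← fderiv_comp_add_right]
  congr 1
  exact funext fun y ↦ hf y k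

end Periodic

section Inequalities

variable {F : Type*} [NormedAddCommGroup F] [NormedSpace ℝ F] {f : R2 → F}

set_option maxSynthPendingDepth 3 in
theorem Periodic2.sq_mul_setIntegral_norm_fderiv_apply_sq_le (hp : Periodic2 f)
    (hf : ContDiff ℝ 2 f) (i : Fin 2) {h : ℝ} (hh : 0 ≤ h) :
    h ^ 2 * ∫ x in Q2, ‖fderiv ℝ f x 𝐞[i]‖ ^ 2 ≤ 2 * (∫ x in Q2, ‖f (x + h • 𝐞[i]) - f x‖ ^ 2) +
      2 * h ^ 4 * ∫ x in Q2, ‖fderiv ℝ (fderiv ℝ f) x‖ ^ 2 := by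
  have hf' : ContDiff ℝ 1 (fderiv ℝ f) := hf.fderiv_right (by norm_num)
  have c₀ : Continuous f := hf.continuous
  have c₁ : Continuous (fderiv ℝ f) := hf'.continuous
  have c₂ : Continuous (fderiv ℝ (fderiv ℝ f)) := hf'.continuous_fderiv one_ne_zero
  have hd (x : R2) (t : ℝ) := hasDerivAt_comp_line (hf.differentiable two_ne_zero) x 𝐞[i] t
  have hd' (x : R2) (t : ℝ) : HasDerivAt (fun t : ℝ ↦ fderiv ℝ f (x + t • 𝐞[i]) 𝐞[i])
      (fderiv ℝ (fderiv ℝ f) (x + t • 𝐞[i]) 𝐞[i] 𝐞[i]) t := by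
    simpa using (hasDerivAt_comp_line (hf'.differentiable one_ne_zero) x 𝐞[i] t).clm_apply
      (hasDerivAt_const t 𝐞[i])
  calc h ^ 2 * ∫ x in Q2, ‖fderiv ℝ f x 𝐞[i]‖ ^ 2
      = ∫ x in Q2, h ^ 2 * ‖fderiv ℝ f x 𝐞[i]‖ ^ 2 := (integral_const_mul _ _).symm
    _ ≤ ∫ x in Q2, (2 * ‖f (x + h • 𝐞[i]) - f x‖ ^ 2 +
          2 * h ^ 4 * ‖fderiv ℝ (fderiv ℝ f) x 𝐞[i] 𝐞[i]‖ ^ 2) := by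
        refine setIntegral_Q2_mono_of_slices (by fun_prop) (by fun_prop) i fun x ↦ ?_
        have slice := sq_mul_integral_norm_deriv_sq_le (hd x) (hd' x) (by fun_prop) two_pi_pos.le
          ((hp.fderiv.fderiv.periodic_line x i).comp fun A ↦ A 𝐞[i] 𝐞[i]) (-π) hh
        rw [show -π + 2 * π = π by ring] at slice
        simpa only [intervalIntegral.integral_const_mul, add_smul, add_assoc] using slice
    _ ≤ ∫ x in Q2, (2 * ‖f (x + h • 𝐞[i]) - f x‖ ^ 2 +
          2 * h ^ 4 * ‖fderiv ℝ (fderiv ℝ f) x‖ ^ 2) := by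
        refine setIntegral_Q2_mono (by fun_prop) (by fun_prop) fun x ↦ ?_
        gcongr
        exact (norm_apply_single_le _ i).trans (norm_apply_single_le _ i)
    _ = _ := by
        rw [integral_add (integrableOn_Q2 (by fun_prop)) (integrableOn_Q2 (by fun_prop)),
          integral_const_mul, integral_const_mul]

theorem Periodic2.sq_mul_setIntegral_norm_fderiv_sq_le (hp : Periodic2 f) (hf : ContDiff ℝ 2 f)
    {h : ℝ} (hh : 0 ≤ h) :
    h ^ 2 * ∫ x in Q2, ‖fderiv ℝ f x‖ ^ 2 ≤
      2 * (∑ i, ∫ x in Q2, ‖f (x + h • 𝐞[i]) - f x‖ ^ 2) +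
      4 * h ^ 4 * ∫ x in Q2, ‖fderiv ℝ (fderiv ℝ f) x‖ ^ 2 := by
  have c₁ : Continuous (fderiv ℝ f) := hf.continuous_fderiv two_ne_zero
  calc h ^ 2 * ∫ x in Q2, ‖fderiv ℝ f x‖ ^ 2
      ≤ h ^ 2 * ∫ x in Q2, ∑ i, ‖fderiv ℝ f x 𝐞[i]‖ ^ 2 :=
        mul_le_mul_of_nonneg_left (setIntegral_Q2_mono (by fun_prop) (by fun_prop)
          fun x ↦ opNorm_sq_le_sum (fderiv ℝ f x)) (sq_nonneg h)
    _ = ∑ i, h ^ 2 * ∫ x in Q2, ‖fderiv ℝ f x 𝐞[i]‖ ^ 2 := by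
        rw [integral_finsetSum _ fun i _ ↦ integrableOn_Q2 (by fun_prop), Finset.mul_sum]
    _ ≤ ∑ i, (2 * (∫ x in Q2, ‖f (x + h • 𝐞[i]) - f x‖ ^ 2) +
          2 * h ^ 4 * ∫ x in Q2, ‖fderiv ℝ (fderiv ℝ f) x‖ ^ 2) :=
        Finset.sum_le_sum fun i _ ↦ hp.sq_mul_setIntegral_norm_fderiv_apply_sq_le hf i hh
    _ = _ := by simp only [Fin.sum_univ_two]; ring

theorem Periodic2.setIntegral_norm_fderiv_sq_le (hp : Periodic2 f) (hf : ContDiff ℝ 2 f) :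
    ∫ x in Q2, ‖fderiv ℝ f x‖ ^ 2 ≤ (4 * π) ^ 2 * ∫ x in Q2, ‖fderiv ℝ (fderiv ℝ f) x‖ ^ 2 := by
  have difference (x : R2) (i : Fin 2) : f (x + (2 * π) • 𝐞[i]) - f x = 0 := by
    simpa [sub_eq_zero] using hp.periodic_line x i 0
  have key := hp.sq_mul_setIntegral_norm_fderiv_sq_le hf two_pi_pos.le
  simp only [difference, norm_zero, ne_eq, OfNat.ofNat_ne_zero, not_false_eq_true, zero_pow,
    integral_zero, Finset.sum_const_zero, mul_zero, zero_add] at key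
  refine le_of_mul_le_mul_left (key.trans_eq ?_) (pow_pos two_pi_pos 2)
  ring

theorem Periodic2.sq_setIntegral_norm_fderiv_sq_le (hp : Periodic2 f) (hf : ContDiff ℝ 2 f) :
    (∫ x in Q2, ‖fderiv ℝ f x‖ ^ 2) ^ 2 ≤
      16 ^ 2 * ((∫ x in Q2, ‖f x‖ ^ 2) * ∫ x in Q2, ‖fderiv ℝ (fderiv ℝ f) x‖ ^ 2) := by
  set X := ∫ x in Q2, ‖f x‖ ^ 2
  set A := ∫ x in Q2, ‖fderiv ℝ f x‖ ^ 2
  set Y := ∫ x in Q2, ‖fderiv ℝ (fderiv ℝ f) x‖ ^ 2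
  have hX : 0 ≤ X := integral_nonneg fun x ↦ sq_nonneg _
  have hA : 0 ≤ A := integral_nonneg fun x ↦ sq_nonneg _
  have hY : 0 ≤ Y := integral_nonneg fun x ↦ sq_nonneg _
  have scaled {h : ℝ} (hh : 0 ≤ h) : h ^ 2 * A ≤ 16 * X + 4 * h ^ 4 * Y :=
    calc h ^ 2 * A ≤ 2 * (∑ i, ∫ x in Q2, ‖f (x + h • 𝐞[i]) - f x‖ ^ 2) + 4 * h ^ 4 * Y :=
          hp.sq_mul_setIntegral_norm_fderiv_sq_le hf hh
      _ ≤ 2 * (∑ _i : Fin 2, 4 * X) + 4 * h ^ 4 * Y := by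
          gcongr with i; exact hp.setIntegral_norm_sub_sq_le hf.continuous h i
      _ = 16 * X + 4 * h ^ 4 * Y := by simp only [Fin.sum_univ_two]; ring
  have quadratic (s : ℝ) : 0 ≤ 4 * Y * (s * s) + -A * s + 16 * X := by
    rcases le_total 0 s with hs | hs
    · have := scaled (sqrt_nonneg s)
      rw [show √s ^ 4 = (√s ^ 2) ^ 2 by ring, sq_sqrt hs] at this
      linarith
    · nlinarith [mul_self_nonneg s, mul_nonneg hA (neg_nonneg.2 hs)]
  have := discrim_le_zero quadratic
  rw [discrim] at this
  linarith

theorem sq_mul_setIntegral_norm_pow_four_le (hf : ContDiff ℝ 1 f) :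
    (2 * π) ^ 2 * ∫ x in Q2, ‖f x‖ ^ 4 ≤
      ((∫ x in Q2, ‖f x‖ ^ 2) + 4 * π * ∫ x in Q2, ‖f x‖ * ‖fderiv ℝ f x‖) ^ 2 := by
  have c₀ : Continuous f := hf.continuous
  have c₁ : Continuous (fderiv ℝ f) := hf.continuous_fderiv one_ne_zero
  calc (2 * π) ^ 2 * ∫ x in Q2, ‖f x‖ ^ 4 = ∫ x in Q2, (2 * π * ‖f x‖ ^ 2) ^ 2 := by
        rw [← integral_const_mul]; congr! 2; ring
    _ ≤ (∫ x in Q2, (‖f x‖ ^ 2 + 4 * π * (‖f x‖ * ‖fderiv ℝ f x‖))) ^ 2 := by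
        refine sq_setIntegral_Q2_le_of_slices (by fun_prop) (by fun_prop)
          (fun x ↦ by positivity) fun i c t ht ↦ ?_
        have slice := norm_sq_le_integral_norm_sq_add
          (hasDerivAt_comp_line (hf.differentiable one_ne_zero) (c • 𝐞[i.rev]) 𝐞[i])
          (by fun_prop) ht
        rw [sub_neg_eq_add, ← two_mul] at slice
        refine slice.trans <| intervalIntegral.integral_mono (by linarith [pi_pos])
          (Continuous.intervalIntegrable (by fun_prop) _ _)
          (Continuous.intervalIntegrable (by fun_prop) _ _) fun s ↦ ?_
        rw [show 2 * (2 * π) = 4 * π by ring]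
        dsimp only
        gcongr
        exact norm_apply_single_le _ i
    _ = _ := by
        rw [integral_add (integrableOn_Q2 (by fun_prop)) (integrableOn_Q2 (by fun_prop)),
          integral_const_mul]

end Inequalities

section Sobolev

variable {F : Type*} [NormedAddCommGroup F] [NormedSpace ℝ F] {φ : R2 → F}

/-- The square `‖∇ʲφ‖²_{L²(T²)}` of the homogeneous Sobolev seminorm of order `j`. -/
def homSobolevSq (φ : R2 → F) (j : ℕ) : ℝ := ∫ x in Q2, ‖iteratedFDeriv ℝ j φ x‖ ^ 2

theorem homSobolevSq_nonneg (φ : R2 → F) (j : ℕ) : 0 ≤ homSobolevSq φ j :=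
  integral_nonneg fun _ ↦ sq_nonneg _

theorem homSobolevSq_succ_le (hp : Periodic2 φ) {j : ℕ} (hφ : ContDiff ℝ (j + 2 : ℕ) φ) :
    homSobolevSq φ (j + 1) ≤ (4 * π) ^ 2 * homSobolevSq φ (j + 2) := by
  simpa only [homSobolevSq, norm_fderiv_iteratedFDeriv, norm_fderiv_fderiv_iteratedFDeriv] using
    (hp.iteratedFDeriv j).setIntegral_norm_fderiv_sq_le
      (hφ.iteratedFDeriv_right (by norm_cast; omega))

theorem homSobolevSq_succ_sq_le (hp : Periodic2 φ) {j : ℕ} (hφ : ContDiff ℝ (j + 2 : ℕ) φ) :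
    homSobolevSq φ (j + 1) ^ 2 ≤ 16 ^ 2 * (homSobolevSq φ j * homSobolevSq φ (j + 2)) := by
  simpa only [homSobolevSq, norm_fderiv_iteratedFDeriv, norm_fderiv_fderiv_iteratedFDeriv] using
    (hp.iteratedFDeriv j).sq_setIntegral_norm_fderiv_sq_le
      (hφ.iteratedFDeriv_right (by norm_cast; omega))

theorem homSobolevSq_le_rpow_mul_rpow (hp : Periodic2 φ) {k₀ l k : ℕ} (hφ : ContDiff ℝ k φ)
    (h₀ : k₀ ≤ l) (hl : l ≤ k) (hk : k₀ < k) :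
    homSobolevSq φ l ≤ 16 ^ ((l - k₀) * (k - l)) *
      (homSobolevSq φ k₀ ^ (((k : ℝ) - l) / (k - k₀)) *
        homSobolevSq φ k ^ (((l : ℝ) - k₀) / (k - k₀))) := by
  obtain ⟨j, rfl⟩ := Nat.exists_eq_add_of_le h₀
  obtain ⟨d, rfl⟩ := Nat.exists_eq_add_of_le hl
  have := le_pow_mul_rpow_mul_rpow_of_sq_le_mul (c := fun i ↦ homSobolevSq φ (k₀ + i))
    (n := j + d) (j := j) (d := d) (fun i ↦ homSobolevSq_nonneg φ _) (D := 16) (by norm_num)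
    (fun i hi ↦ homSobolevSq_succ_sq_le hp (j := k₀ + i) (hφ.of_le (by norm_cast; omega)))
    (by omega) le_rfl
  simpa [add_assoc, Nat.add_sub_add_left] using this

theorem setIntegral_norm_iteratedFDeriv_pow_four_le (hp : Periodic2 φ) {j : ℕ}
    (hφ : ContDiff ℝ (j + 2 : ℕ) φ) :
    ∫ x in Q2, ‖iteratedFDeriv ℝ (j + 1) φ x‖ ^ 4 ≤
      16 * (homSobolevSq φ (j + 1) * homSobolevSq φ (j + 2)) := by
  have c₁ : Continuous (iteratedFDeriv ℝ (j + 1) φ) :=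
    hφ.continuous_iteratedFDeriv (by norm_cast; omega)
  have c₂ : Continuous (iteratedFDeriv ℝ (j + 2) φ) := hφ.continuous_iteratedFDeriv le_rfl
  have ladyzhenskaya := sq_mul_setIntegral_norm_pow_four_le (f := iteratedFDeriv ℝ (j + 1) φ)
    (hφ.iteratedFDeriv_right (by norm_cast; omega))
  simp only [norm_fderiv_iteratedFDeriv] at ladyzhenskaya
  have cauchySchwarz := sq_setIntegral_Q2_mul_le c₁.norm c₂.norm
  have poincare := homSobolevSq_succ_le hp hφ
  have hX := homSobolevSq_nonneg φ (j + 1)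
  change _ ≤ (homSobolevSq φ (j + 1) + _) ^ 2 at ladyzhenskaya
  change _ ≤ homSobolevSq φ (j + 1) * homSobolevSq φ (j + 2) at cauchySchwarz
  set X := homSobolevSq φ (j + 1)
  set Y := homSobolevSq φ (j + 2)
  set Z := ∫ x in Q2, ‖iteratedFDeriv ℝ (j + 1) φ x‖ * ‖iteratedFDeriv ℝ (j + 2) φ x‖
  refine le_of_mul_le_mul_left (ladyzhenskaya.trans ?_) (pow_pos two_pi_pos 2)
  calc (X + 4 * π * Z) ^ 2 ≤ 2 * (X ^ 2 + (4 * π * Z) ^ 2) := add_sq_le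
    _ = 2 * (X * X + (4 * π) ^ 2 * Z ^ 2) := by ring
    _ ≤ 2 * (X * ((4 * π) ^ 2 * Y) + (4 * π) ^ 2 * (X * Y)) := by gcongr
    _ = _ := by ring

theorem setIntegral_norm_iteratedFDeriv_pow_four_le_rpow (hp : Periodic2 φ) {k₀ l k : ℕ}
    (hφ : ContDiff ℝ k φ) (h₀ : k₀ ≤ l) (hl : 1 ≤ l) (hlk : l < k) :
    ∫ x in Q2, ‖iteratedFDeriv ℝ l φ x‖ ^ 4 ≤
      16 ^ ((l - k₀) * (k - l) + (l + 1 - k₀) * (k - (l + 1)) + 1) *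
        (homSobolevSq φ k₀ ^ ((2 * (k - l) - 1 : ℝ) / (k - k₀)) *
          homSobolevSq φ k ^ ((2 * (l - k₀) + 1 : ℝ) / (k - k₀))) := by
  have hX := homSobolevSq_nonneg φ k₀
  have hY := homSobolevSq_nonneg φ k
  have endpoint := setIntegral_norm_iteratedFDeriv_pow_four_le hp (j := l - 1)
    (hφ.of_le (by norm_cast; omega))
  rw [show l - 1 + 1 = l by omega, show l - 1 + 2 = l + 1 by omega] at endpoint
  refine endpoint.trans ?_
  have hkl : (1 : ℝ) ≤ k - l := by rw [le_sub_iff_add_le']; exact_mod_cast hlk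
  have hlk₀ : (0 : ℝ) ≤ l - k₀ := by rw [sub_nonneg]; exact_mod_cast h₀
  calc 16 * (homSobolevSq φ l * homSobolevSq φ (l + 1))
      ≤ 16 * ((16 ^ ((l - k₀) * (k - l)) *
          (homSobolevSq φ k₀ ^ (((k : ℝ) - l) / (k - k₀)) *
            homSobolevSq φ k ^ (((l : ℝ) - k₀) / (k - k₀)))) *
        (16 ^ ((l + 1 - k₀) * (k - (l + 1))) *
          (homSobolevSq φ k₀ ^ (((k : ℝ) - (l + 1 : ℕ)) / (k - k₀)) *
            homSobolevSq φ k ^ (((l + 1 : ℕ) - k₀ : ℝ) / (k - k₀))))) := by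
        gcongr
        · exact homSobolevSq_nonneg φ _
        · exact homSobolevSq_le_rpow_mul_rpow hp hφ h₀ hlk.le (by omega)
        · exact homSobolevSq_le_rpow_mul_rpow hp hφ (by omega) hlk (by omega)
    _ = 16 ^ ((l - k₀) * (k - l) + (l + 1 - k₀) * (k - (l + 1)) + 1) *
        ((homSobolevSq φ k₀ ^ (((k : ℝ) - l) / (k - k₀)) *
            homSobolevSq φ k₀ ^ (((k : ℝ) - (l + 1 : ℕ)) / (k - k₀))) *
          (homSobolevSq φ k ^ (((l : ℝ) - k₀) / (k - k₀)) *
            homSobolevSq φ k ^ (((l + 1 : ℕ) - k₀ : ℝ) / (k - k₀)))) := by ring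
    _ = _ := by
        push_cast
        rw [← rpow_add_of_nonneg hX, ← rpow_add_of_nonneg hY, ← add_div, ← add_div]
        · congr! 4 <;> ring
        all_goals exact div_nonneg (by linarith) (by linarith)

end Sobolev

theorem stmt2_general {F : Type*} [NormedAddCommGroup F] [NormedSpace ℝ F] (k k₀ l : ℕ)
    (h₀ : k₀ ≤ l) (hl : 1 ≤ l) (hlk : l < k) :
    ∃ C > 0, ∀ φ : R2 → F, ContDiff ℝ k φ → Periodic2 φ →
      (∫ x in Q2, ‖iteratedFDeriv ℝ l φ x‖ ^ 4) ^ ((1:ℝ)/4) ≤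
        C * ((∫ x in Q2, ‖iteratedFDeriv ℝ k₀ φ x‖ ^ 2) ^ ((1:ℝ)/2))
              ^ (((k:ℝ) - l - 1/2) / ((k:ℝ) - k₀)) *
            ((∫ x in Q2, ‖iteratedFDeriv ℝ k φ x‖ ^ 2) ^ ((1:ℝ)/2))
              ^ (((l:ℝ) - k₀ + 1/2) / ((k:ℝ) - k₀)) := by
  let p := (l - k₀) * (k - l) + (l + 1 - k₀) * (k - (l + 1)) + 1
  refine ⟨2 ^ p, by positivity, fun φ hφ hp ↦ ?_⟩
  have hX := homSobolevSq_nonneg φ k₀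
  have hY := homSobolevSq_nonneg φ k
  have hp4 : ((16 : ℝ) ^ p) ^ ((1:ℝ)/4) = 2 ^ p := by
    rw [show (16 : ℝ) = 2 ^ 4 by norm_num, ← pow_mul, mul_comm, pow_mul, ← rpow_natCast _ 4,
      ← rpow_mul (by positivity)]
    norm_num
  calc (∫ x in Q2, ‖iteratedFDeriv ℝ l φ x‖ ^ 4) ^ ((1:ℝ)/4)
      ≤ (16 ^ p * (homSobolevSq φ k₀ ^ ((2 * (k - l) - 1 : ℝ) / (k - k₀)) *
          homSobolevSq φ k ^ ((2 * (l - k₀) + 1 : ℝ) / (k - k₀)))) ^ ((1:ℝ)/4) := by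
        gcongr
        exact setIntegral_norm_iteratedFDeriv_pow_four_le_rpow hp hφ h₀ hl hlk
    _ = 2 ^ p * (homSobolevSq φ k₀ ^ ((1:ℝ)/2)) ^ (((k:ℝ) - l - 1/2) / ((k:ℝ) - k₀)) *
          (homSobolevSq φ k ^ ((1:ℝ)/2)) ^ (((l:ℝ) - k₀ + 1/2) / ((k:ℝ) - k₀)) := by
        rw [mul_rpow (by positivity) (by positivity), mul_rpow (by positivity) (by positivity), hp4,
          ← rpow_mul hX, ← rpow_mul hX, ← rpow_mul hY, ← rpow_mul hY, mul_assoc]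
        congr! 3 <;> ring

/-- Gagliardo–Nirenberg lemma, general case. -/
theorem stmt2 (k k₀ l : ℕ) (h1 : k₀ < k) (h2 : k₀ ≤ l) (h3 : l ≤ k - 1)
    (h4 : ¬(k₀ = 0 ∧ l = 0)) :
    ∃ C > 0, ∀ φ : R2 → ℂ, ContDiff ℝ (k : ℕ∞) φ → Periodic2 φ →
      (∫ x in Q2, ‖iteratedFDeriv ℝ l φ x‖ ^ 4) ^ ((1:ℝ)/4) ≤
        C * ((∫ x in Q2, ‖iteratedFDeriv ℝ k₀ φ x‖ ^ 2) ^ ((1:ℝ)/2))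
              ^ (((k:ℝ) - l - 1/2) / ((k:ℝ) - k₀)) *
            ((∫ x in Q2, ‖iteratedFDeriv ℝ k φ x‖ ^ 2) ^ ((1:ℝ)/2))
              ^ (((l:ℝ) - k₀ + 1/2) / ((k:ℝ) - k₀)) := by
  exact stmt2_general k k₀ l h2 (by omega) (by omega)
end
end

section
/- There exists a constant C > 0 such that for every finitely supported function f : ℤ² → ℂ with f(0,0) = 0, one has ( ∑_{k∈ℤ²} |f(k)|^{4/3} )^{3/4} ≤ C ( ∑_{k∈ℤ²} |f(k)|² )^{1/4} ( ∑_{k∈ℤ²} ‖k‖² |f(k)|² )^{1/4}, where ‖k‖ denotes the Euclidean norm of k ∈ ℤ² ⊂ ℝ². -/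
/-!
Write `A = ∑ ‖f k‖²`, `B = ∑ ‖k‖² ‖f k‖²`. For a frequency scale `R ≥ 1`, Hölder's inequality with
exponents `1/2 + 1/4 = 3/4` and weight `R² + ‖k‖²` gives
`‖f‖_{4/3} ≤ (R² A + B)^{1/2} (∑ (R² + ‖k‖²)⁻²)^{1/4}`. The lattice sum is `O(R⁻²)`, because
`(R² + k₁² + k₂²)²` dominates `(R² + k₁²)(R² + k₂²)` and each one-dimensional sum is `O(R⁻¹)` by
telescoping. Hence `‖f‖_{4/3}² ≲ R A + B / R`, and `R = √(B / A)` balances the two terms. This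
choice is admissible, `R ≥ 1`, since a nonzero lattice point has norm at least `1` and `f 0 = 0`.
-/

section WeightedHolder

variable {ι : Type*} {p q r : ℝ} {g w : ι → ℝ}

theorem summable_rpow_and_Lr_le_weighted_Lp_mul_Lq (hpqr : p.HolderTriple q r)
    (hg : ∀ i, 0 ≤ g i) (hw : ∀ i, 0 < w i) (hgw : Summable fun i ↦ w i * g i ^ p)
    (hw_sum : Summable fun i ↦ w i ^ (-(q / p))) :
    (Summable fun i ↦ g i ^ r) ∧
      (∑' i, g i ^ r) ^ (1 / r) ≤
        (∑' i, w i * g i ^ p) ^ (1 / p) * (∑' i, w i ^ (-(q / p))) ^ (1 / q) := by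
  have hp : p ≠ 0 := hpqr.ne_zero
  have h_left (i : ι) : (w i ^ (1 / p) * g i) ^ p = w i * g i ^ p := by
    rw [Real.mul_rpow (Real.rpow_nonneg (hw i).le _) (hg i), ← Real.rpow_mul (hw i).le,
      one_div_mul_cancel hp, Real.rpow_one]
  have h_right (i : ι) : (w i ^ (-(1 / p))) ^ q = w i ^ (-(q / p)) := by
    rw [← Real.rpow_mul (hw i).le]
    ring_nf
  have h_mul (i : ι) : w i ^ (1 / p) * g i * w i ^ (-(1 / p)) = g i := by
    rw [mul_right_comm, ← Real.rpow_add (hw i), add_neg_cancel, Real.rpow_zero, one_mul]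
  have hu (i : ι) : 0 ≤ w i ^ (1 / p) * g i := mul_nonneg (Real.rpow_nonneg (hw i).le _) (hg i)
  have hv (i : ι) : 0 ≤ w i ^ (-(1 / p)) := Real.rpow_nonneg (hw i).le _
  simp only [← h_left, ← h_right] at hgw hw_sum ⊢
  have h_sum := Real.summable_Lr_of_Lp_Lq_of_nonneg hpqr hu hv hgw hw_sum
  have h_le := Real.Lr_le_Lp_mul_Lq_tsum_of_nonneg hpqr hu hv hgw hw_sum
  simp only [h_mul] at h_sum h_le
  exact ⟨h_sum, h_le⟩

end WeightedHolder

section LatticeSums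

variable {R : ℝ}

theorem inv_sq_add_succ_sq_le_sub (hR : 0 < R) (n : ℕ) :
    (R ^ 2 + ((n : ℝ) + 1) ^ 2)⁻¹ ≤ 2 * ((R + n)⁻¹ - (R + (n + 1 : ℕ))⁻¹) := by
  have h_sub : 2 * ((R + n)⁻¹ - (R + (n + 1 : ℕ))⁻¹) = ((R + n) * (R + (n + 1)) / 2)⁻¹ := by
    push_cast
    field_simp
    ring
  rw [h_sub]
  refine inv_anti₀ (by positivity) ?_
  have : (R + n) * (R + (n + 1)) ≤ (R + (n + 1)) ^ 2 := by
    rw [sq]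
    gcongr
    exact le_add_of_nonneg_right zero_le_one
  linarith [add_sq_le (a := R) (b := n + 1)]

theorem sum_range_inv_sq_add_succ_sq_le (hR : 0 < R) (N : ℕ) :
    ∑ n ∈ Finset.range N, (R ^ 2 + ((n : ℝ) + 1) ^ 2)⁻¹ ≤ 2 / R := by
  calc ∑ n ∈ Finset.range N, (R ^ 2 + ((n : ℝ) + 1) ^ 2)⁻¹
      ≤ ∑ n ∈ Finset.range N, 2 * ((R + n)⁻¹ - (R + (n + 1 : ℕ))⁻¹) :=
        Finset.sum_le_sum fun n _ ↦ inv_sq_add_succ_sq_le_sub hR n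
    _ = 2 * (R⁻¹ - (R + N)⁻¹) := by
        rw [← Finset.mul_sum, Finset.sum_range_sub' fun n : ℕ ↦ (R + n)⁻¹, Nat.cast_zero, add_zero]
    _ ≤ 2 * R⁻¹ := by
        gcongr
        exact sub_le_self _ (by positivity)
    _ = 2 / R := (div_eq_mul_inv _ _).symm

theorem summable_nat_inv_sq_add_succ_sq (hR : 0 < R) :
    Summable fun n : ℕ ↦ (R ^ 2 + ((n : ℝ) + 1) ^ 2)⁻¹ :=
  summable_of_sum_range_le (fun _ ↦ by positivity) (sum_range_inv_sq_add_succ_sq_le hR)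

theorem hasSum_int_inv_sq_add_sq (hR : 0 < R) :
    HasSum (fun a : ℤ ↦ (R ^ 2 + (a : ℝ) ^ 2)⁻¹)
      ((R ^ 2)⁻¹ + 2 * ∑' n : ℕ, (R ^ 2 + ((n : ℝ) + 1) ^ 2)⁻¹) := by
  have h := (summable_nat_inv_sq_add_succ_sq hR).hasSum
  convert HasSum.of_add_one_of_neg_add_one (f := fun a : ℤ ↦ (R ^ 2 + (a : ℝ) ^ 2)⁻¹)
    (by simpa using h) (by simpa [← neg_add_rev, add_comm] using h) using 1
  simp only [Int.cast_zero]
  ring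

theorem tsum_int_inv_sq_add_sq_le (hR : 0 < R) :
    ∑' a : ℤ, (R ^ 2 + (a : ℝ) ^ 2)⁻¹ ≤ (R ^ 2)⁻¹ + 4 / R := by
  have h : ∑' n : ℕ, (R ^ 2 + ((n : ℝ) + 1) ^ 2)⁻¹ ≤ 2 / R :=
    Real.tsum_le_of_sum_range_le (fun _ ↦ by positivity) (sum_range_inv_sq_add_succ_sq_le hR)
  rw [(hasSum_int_inv_sq_add_sq hR).tsum_eq]
  linarith [show 4 / R = 2 * (2 / R) by ring]

theorem inv_sq_add_sq_add_sq_le_mul {c : ℝ} (hc : 0 < c) (x y : ℝ) :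
    ((c + (x ^ 2 + y ^ 2)) ^ 2)⁻¹ ≤ (c + x ^ 2)⁻¹ * (c + y ^ 2)⁻¹ := by
  rw [← mul_inv, sq (c + (x ^ 2 + y ^ 2))]
  gcongr <;> linarith [sq_nonneg x, sq_nonneg y]

theorem summable_int_prod_inv_sq_add_sq_mul (hR : 0 < R) :
    Summable fun m : ℤ × ℤ ↦ (R ^ 2 + (m.1 : ℝ) ^ 2)⁻¹ * (R ^ 2 + (m.2 : ℝ) ^ 2)⁻¹ := by
  have h := (hasSum_int_inv_sq_add_sq hR).summable
  exact h.mul_of_nonneg h (fun _ ↦ by positivity) (fun _ ↦ by positivity)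

theorem summable_int_prod_inv_sq_add_normSq_sq (hR : 0 < R) :
    Summable fun m : ℤ × ℤ ↦ ((R ^ 2 + ((m.1 : ℝ) ^ 2 + (m.2 : ℝ) ^ 2)) ^ 2)⁻¹ :=
  (summable_int_prod_inv_sq_add_sq_mul hR).of_nonneg_of_le (fun _ ↦ by positivity)
    fun m ↦ inv_sq_add_sq_add_sq_le_mul (pow_pos hR 2) m.1 m.2

theorem tsum_int_prod_inv_sq_add_normSq_sq_le (hR : 0 < R) :
    ∑' m : ℤ × ℤ, ((R ^ 2 + ((m.1 : ℝ) ^ 2 + (m.2 : ℝ) ^ 2)) ^ 2)⁻¹ ≤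
      ((R ^ 2)⁻¹ + 4 / R) ^ 2 := by
  have h_int := (hasSum_int_inv_sq_add_sq hR).summable
  have h_prod := summable_int_prod_inv_sq_add_sq_mul hR
  calc ∑' m : ℤ × ℤ, ((R ^ 2 + ((m.1 : ℝ) ^ 2 + (m.2 : ℝ) ^ 2)) ^ 2)⁻¹
      ≤ ∑' m : ℤ × ℤ, (R ^ 2 + (m.1 : ℝ) ^ 2)⁻¹ * (R ^ 2 + (m.2 : ℝ) ^ 2)⁻¹ :=
        (summable_int_prod_inv_sq_add_normSq_sq hR).tsum_le_tsum
          (fun m ↦ inv_sq_add_sq_add_sq_le_mul (pow_pos hR 2) m.1 m.2) h_prod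
    _ = (∑' a : ℤ, (R ^ 2 + (a : ℝ) ^ 2)⁻¹) ^ 2 := by
        rw [sq (∑' _, _), h_int.tsum_mul_tsum h_int h_prod]
    _ ≤ ((R ^ 2)⁻¹ + 4 / R) ^ 2 := by
        gcongr
        exact tsum_int_inv_sq_add_sq_le hR

theorem tsum_int_prod_inv_sq_add_normSq_sq_le_of_one_le (hR : 1 ≤ R) :
    ∑' m : ℤ × ℤ, ((R ^ 2 + ((m.1 : ℝ) ^ 2 + (m.2 : ℝ) ^ 2)) ^ 2)⁻¹ ≤ (5 / R) ^ 2 := by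
  have hR₀ : 0 < R := by positivity
  refine (tsum_int_prod_inv_sq_add_normSq_sq_le hR₀).trans ?_
  have h_inv : (R ^ 2)⁻¹ ≤ 1 / R := by
    rw [one_div]
    exact inv_anti₀ hR₀ (le_self_pow₀ hR two_ne_zero)
  gcongr
  linarith [show 5 / R = 1 / R + 4 / R by ring]

theorem one_le_normSq_of_ne_zero {m : ℤ × ℤ} (hm : m ≠ 0) :
    1 ≤ (m.1 : ℝ) ^ 2 + (m.2 : ℝ) ^ 2 := by
  have h_int : 0 < m.1 ^ 2 + m.2 ^ 2 := by
    by_cases h : m.1 = 0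
    · have : m.2 ≠ 0 := fun h' ↦ hm (Prod.ext h h')
      positivity
    · positivity
  exact_mod_cast h_int

end LatticeSums

section GagliardoNirenberg

variable {E : Type*} [SeminormedAddCommGroup E] {f : ℤ × ℤ → E}

theorem norm_sq_le_normSq_mul_norm_sq (h₀ : f (0, 0) = 0) (m : ℤ × ℤ) :
    ‖f m‖ ^ 2 ≤ ((m.1 : ℝ) ^ 2 + (m.2 : ℝ) ^ 2) * ‖f m‖ ^ 2 := by
  rcases eq_or_ne m 0 with rfl | hm
  · simp [← Prod.mk_zero_zero, h₀]
  · exact le_mul_of_one_le_left (by positivity) (one_le_normSq_of_ne_zero hm)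

theorem summable_rpow_and_Lr_four_thirds_le_of_one_le_scale {R : ℝ} (hR : 1 ≤ R)
    (hA : Summable fun m ↦ ‖f m‖ ^ 2)
    (hB : Summable fun m : ℤ × ℤ ↦ ((m.1 : ℝ) ^ 2 + (m.2 : ℝ) ^ 2) * ‖f m‖ ^ 2) :
    (Summable fun m ↦ ‖f m‖ ^ ((4 : ℝ) / 3)) ∧
      (∑' m, ‖f m‖ ^ ((4 : ℝ) / 3)) ^ ((3 : ℝ) / 4) ≤
        √(5 * (R * ∑' m, ‖f m‖ ^ 2 +
          (∑' m : ℤ × ℤ, ((m.1 : ℝ) ^ 2 + (m.2 : ℝ) ^ 2) * ‖f m‖ ^ 2) / R)) := by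
  have hR₀ : 0 < R := by positivity
  let w (m : ℤ × ℤ) : ℝ := R ^ 2 + ((m.1 : ℝ) ^ 2 + (m.2 : ℝ) ^ 2)
  have hw (m : ℤ × ℤ) : 0 < w m := by positivity
  have hw_inv (m : ℤ × ℤ) : w m ^ (-((4 : ℝ) / 2)) = (w m ^ 2)⁻¹ := by
    rw [Real.rpow_neg (hw m).le]
    norm_num
  have hw_energy : HasSum (fun m ↦ w m * ‖f m‖ ^ (2 : ℝ)) (R ^ 2 * ∑' m, ‖f m‖ ^ 2 +
      ∑' m : ℤ × ℤ, ((m.1 : ℝ) ^ 2 + (m.2 : ℝ) ^ 2) * ‖f m‖ ^ 2) := by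
    simpa only [w, add_mul, Real.rpow_two] using (hA.hasSum.mul_left (R ^ 2)).add hB.hasSum
  have h_triple : (2 : ℝ).HolderTriple 4 (4 / 3) := ⟨by norm_num, by norm_num, by norm_num⟩
  obtain ⟨h_sum, h_holder⟩ := summable_rpow_and_Lr_le_weighted_Lp_mul_Lq h_triple
    (fun m ↦ norm_nonneg (f m)) hw hw_energy.summable
    (by simpa only [hw_inv] using summable_int_prod_inv_sq_add_normSq_sq hR₀)
  refine ⟨h_sum, ?_⟩
  simp only [hw_inv, hw_energy.tsum_eq, one_div_div] at h_holder
  set A := ∑' m, ‖f m‖ ^ 2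
  set B := ∑' m : ℤ × ℤ, ((m.1 : ℝ) ^ 2 + (m.2 : ℝ) ^ 2) * ‖f m‖ ^ 2
  calc (∑' m, ‖f m‖ ^ ((4 : ℝ) / 3)) ^ ((3 : ℝ) / 4)
      ≤ (R ^ 2 * A + B) ^ ((1 : ℝ) / 2) * (∑' m, (w m ^ 2)⁻¹) ^ ((1 : ℝ) / 4) := h_holder
    _ ≤ (R ^ 2 * A + B) ^ ((1 : ℝ) / 2) * ((5 / R) ^ 2) ^ ((1 : ℝ) / 4) := by
        gcongr
        exact tsum_int_prod_inv_sq_add_normSq_sq_le_of_one_le hR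
    _ = √(R ^ 2 * A + B) * √(5 / R) := by
        rw [← Real.rpow_natCast_mul (by positivity), Real.sqrt_eq_rpow, Real.sqrt_eq_rpow]
        norm_num
    _ = √(5 * (R * A + B / R)) := by
        rw [← Real.sqrt_mul' _ (by positivity)]
        congr 1
        field_simp

theorem sqrt_div_sqrt_mul_add_div {A B : ℝ} (hA : 0 < A) (hB : 0 < B) :
    √B / √A * A + B / (√B / √A) = 2 * √A * √B := by
  field_simp
  rw [Real.sq_sqrt hA.le, Real.sq_sqrt hB.le]
  ring

theorem sqrt_sqrt_eq_rpow {x : ℝ} (hx : 0 ≤ x) : √√x = x ^ ((1 : ℝ) / 4) := by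
  rw [Real.sqrt_eq_rpow, Real.sqrt_eq_rpow, ← Real.rpow_mul hx]
  norm_num

theorem stmt3_general (h₀ : f (0, 0) = 0)
    (hB : Summable fun m : ℤ × ℤ ↦ ((m.1 : ℝ) ^ 2 + (m.2 : ℝ) ^ 2) * ‖f m‖ ^ 2) :
    (Summable fun m ↦ ‖f m‖ ^ ((4 : ℝ) / 3)) ∧
      (∑' m, ‖f m‖ ^ ((4 : ℝ) / 3)) ^ ((3 : ℝ) / 4) ≤
        √10 * (∑' m, ‖f m‖ ^ 2) ^ ((1 : ℝ) / 4) *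
          (∑' m : ℤ × ℤ, ((m.1 : ℝ) ^ 2 + (m.2 : ℝ) ^ 2) * ‖f m‖ ^ 2) ^ ((1 : ℝ) / 4) := by
  have h_le := norm_sq_le_normSq_mul_norm_sq h₀
  have hA : Summable fun m ↦ ‖f m‖ ^ 2 := hB.of_nonneg_of_le (fun _ ↦ by positivity) h_le
  by_cases hf : ∀ m, ‖f m‖ = 0
  · simp [hf]
  obtain ⟨k, hk⟩ := not_forall.1 hf
  have hA_pos : 0 < ∑' m, ‖f m‖ ^ 2 := hA.tsum_pos (fun _ ↦ by positivity) k (by positivity)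
  have hAB := hA.tsum_le_tsum h_le hB
  have hB_pos := hA_pos.trans_le hAB
  have hR := (one_le_div (Real.sqrt_pos.2 hA_pos)).2 (Real.sqrt_le_sqrt hAB)
  obtain ⟨h_sum, h_scale⟩ := summable_rpow_and_Lr_four_thirds_le_of_one_le_scale hR hA hB
  refine ⟨h_sum, h_scale.trans_eq ?_⟩
  rw [sqrt_div_sqrt_mul_add_div hA_pos hB_pos, ← mul_assoc, ← mul_assoc,
    Real.sqrt_mul' _ (Real.sqrt_nonneg _), Real.sqrt_mul' _ (Real.sqrt_nonneg _),
    sqrt_sqrt_eq_rpow hA_pos.le, sqrt_sqrt_eq_rpow hB_pos.le, show (5 : ℝ) * 2 = 10 by norm_num]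

end GagliardoNirenberg

/-- Fourier-coefficient form of the L⁴ Gagliardo–Nirenberg estimate on 𝕋². -/
theorem stmt3 :
    ∃ C > 0, ∀ f : ℤ × ℤ → ℂ, (Function.support f).Finite → f (0, 0) = 0 →
      (∑' m : ℤ × ℤ, ‖f m‖ ^ ((4:ℝ)/3)) ^ ((3:ℝ)/4) ≤
        C * (∑' m : ℤ × ℤ, ‖f m‖ ^ 2) ^ ((1:ℝ)/4) *
          (∑' m : ℤ × ℤ, ((m.1:ℝ)^2 + (m.2:ℝ)^2) * ‖f m‖ ^ 2) ^ ((1:ℝ)/4) :=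
  ⟨√10, by positivity, fun f hf h₀ ↦ (stmt3_general h₀ <| summable_of_hasFiniteSupport <|
    hf.subset fun m hm hfm ↦ hm (by simp [hfm])).2⟩
end
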